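/- Let q ≥ 2, suppose A_K > 0, and let θ > 0. Then (1/N)·|{n : m_K(n) ≤ θ}| ≤ 4^{K/q}·∏_{k=1}^K ρ_k^{(1−θ)/q}·(1−ρ_k)^{(1+θ)/q}. -/

import Mathlib

lemma apw_step (q : ℝ) (hq : 2 ≤ q) (r θ a : ℝ) (h0 : 0 < r) (h1 : r < 1)
    (ha : a = (1 / q) * Real.log ((1 - r) / r)) :
    Real.exp (θ * a) * ((1 - r) * Real.exp (-a) + r * Real.exp a) ≤
      (4 : ℝ) ^ (1 / q) * (r ^ ((1 - θ) / q) * (1 - r) ^ ((1 + θ) / q)) := by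
  have hr : 0 < 1 - r := by linarith
  have hq0 : 0 < q := by linarith
  have key : (1 - r) ^ (1 - 2 / q) + r ^ (1 - 2 / q) ≤ (4 : ℝ) ^ (1 / q) := by
    have hs0 : 0 ≤ 1 - 2 / q := by
      rw [sub_nonneg, div_le_one hq0]; exact hq
    have hs1 : 1 - 2 / q ≤ 1 := by
      have : 0 ≤ 2 / q := by positivity
      linarith
    have hc := (Real.concaveOn_rpow hs0 hs1).2 (Set.mem_Ici.2 hr.le) (Set.mem_Ici.2 h0.le)
      (show (0 : ℝ) ≤ 1 / 2 by norm_num) (show (0 : ℝ) ≤ 1 / 2 by norm_num) (by norm_num)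
    simp only [smul_eq_mul] at hc
    have e : (1 / 2 * (1 - r) + 1 / 2 * r : ℝ) = 1 / 2 := by ring
    rw [e] at hc
    have e2 : (4 : ℝ) ^ (1 / q) = 2 * (1 / 2 : ℝ) ^ (1 - 2 / q) := by
      have h4 : (4 : ℝ) = 2 ^ (2 : ℝ) := by norm_num
      rw [h4, ← Real.rpow_mul (by norm_num), one_div (2 : ℝ), Real.inv_rpow (by norm_num),
        Real.rpow_sub (by norm_num), Real.rpow_one]
      have : (2 : ℝ) * (1 / q) = 2 / q := by ring
      rw [this]
      have : (0 : ℝ) < 2 ^ (2 / q) := by positivity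
      field_simp
    rw [e2]; linarith
  have hX : 0 ≤ r ^ ((1 - θ) / q) * (1 - r) ^ ((1 + θ) / q) := by positivity
  refine le_trans (le_of_eq ?_) (mul_le_mul_of_nonneg_right key hX)
  rw [Real.log_div hr.ne' h0.ne'] at ha
  simp only [Real.rpow_def_of_pos hr, Real.rpow_def_of_pos h0]
  conv_lhs => rw [← Real.exp_log hr]
  have : ∀ x : ℝ, r * x = Real.exp (Real.log r) * x := by intro x; rw [Real.exp_log h0]
  rw [this]
  rw [Real.exp_log hr]
  have h2 : ∀ x : ℝ, (1 - r) * x = Real.exp (Real.log (1 - r)) * x := by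
    intro x; rw [Real.exp_log hr]
  rw [h2]
  simp only [mul_add, add_mul, ← Real.exp_add]
  congr 2
  · rw [ha]; field_simp; ring
  · rw [ha]; field_simp; ring


/-- If `q ≥ 2`, `A_K > 0` and `θ > 0`, then
`(1/N)·|{n : m_K(n) ≤ θ}| ≤ 4^{K/q}·∏_{k=1}^K ρ_k^{(1−θ)/q}·(1−ρ_k)^{(1+θ)/q}`. -/
theorem stmt_9 (N : ℕ) (hN : 1 ≤ N) (q : ℝ) (hq : 2 ≤ q)
    (β : ℕ → Fin N → ℝ) (α ρ γ Z : ℕ → ℝ) (w : ℕ → Fin N → ℝ)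
    (hβ : ∀ k n, β (k + 1) n = 1 ∨ β (k + 1) n = -1)
    (hw0 : ∀ n, w 0 n = 1 / N)
    (hZ : ∀ k, Z (k + 1) = ∑ n, w k n * Real.exp (-(α (k + 1)) * β (k + 1) n))
    (hwrec : ∀ k n,
      w (k + 1) n = w k n * Real.exp (-(α (k + 1)) * β (k + 1) n) / Z (k + 1))
    (hρ : ∀ k, ρ (k + 1) =
      ∑ n ∈ Finset.univ.filter (fun n => β (k + 1) n = -1), w k n)
    (hρ0 : ∀ k, 0 < ρ (k + 1)) (hρ1 : ∀ k, ρ (k + 1) < 1)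
    (hα : ∀ k, α (k + 1) = (1 / q) * Real.log ((1 - ρ (k + 1)) / ρ (k + 1)))
    (hγ : ∀ k, γ (k + 1) = 1 / 2 - ρ (k + 1))
    (K : ℕ) (hK : 1 ≤ K)
    (hA : 0 < ∑ k ∈ Finset.range K, α (k + 1))
    (θ : ℝ) (hθ : 0 < θ) :
    (1 / (N : ℝ)) *
        ((Finset.univ.filter (fun n : Fin N =>
          (∑ k ∈ Finset.range K, α (k + 1) * β (k + 1) n) /
            (∑ k ∈ Finset.range K, α (k + 1)) ≤ θ)).card : ℝ)
      ≤ (4 : ℝ) ^ ((K : ℝ) / q) *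
          ∏ k ∈ Finset.range K,
            (ρ (k + 1)) ^ ((1 - θ) / q) * (1 - ρ (k + 1)) ^ ((1 + θ) / q) := by

  have hNp : (0 : ℝ) < N := by exact_mod_cast hN
  have hne : (Finset.univ : Finset (Fin N)).Nonempty := ⟨⟨0, hN⟩, Finset.mem_univ _⟩
  have hZpos : ∀ k, (∀ n, 0 < w k n) → 0 < Z (k + 1) := by
    intro k hk
    rw [hZ]
    exact Finset.sum_pos (fun n _ => mul_pos (hk n) (Real.exp_pos _)) hne
  have hwpos : ∀ k n, 0 < w k n := by
    intro k
    induction k with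
    | zero => intro n; rw [hw0]; positivity
    | succ k ih =>
      intro n
      rw [hwrec]
      exact div_pos (mul_pos (ih n) (Real.exp_pos _)) (hZpos k ih)
  have hwsum : ∀ k, ∑ n, w k n = 1 := by
    intro k
    cases k with
    | zero => simp [hw0, hNp.ne']
    | succ k =>
      simp only [hwrec]
      rw [← Finset.sum_div, ← hZ, div_self (hZpos k (hwpos k)).ne']
  have hZeq : ∀ k, Z (k + 1) =
      (1 - ρ (k + 1)) * Real.exp (-α (k + 1)) + ρ (k + 1) * Real.exp (α (k + 1)) := by
    intro k
    have hs := Finset.sum_filter_add_sum_filter_not Finset.univ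
      (fun n => β (k + 1) n = -1) (w k)
    rw [← hρ, hwsum] at hs
    rw [← eq_sub_iff_add_eq'.mpr hs, hZ, ← Finset.sum_filter_add_sum_filter_not Finset.univ
      (fun n => β (k + 1) n = -1), add_comm, Finset.sum_mul, hρ k, Finset.sum_mul]
    congr 1
    · refine Finset.sum_congr rfl fun n hn => ?_
      rw [Finset.mem_filter] at hn
      rw [(hβ k n).resolve_right hn.2, mul_one]
    · refine Finset.sum_congr rfl fun n hn => ?_
      rw [Finset.mem_filter] at hn
      rw [hn.2]; simp
  have hprod : ∀ M n, w M n * ∏ k ∈ Finset.range M, Z (k + 1) =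
      1 / N * Real.exp (-∑ k ∈ Finset.range M, α (k + 1) * β (k + 1) n) := by
    intro M n
    induction M with
    | zero => simp [hw0]
    | succ M ih =>
      have hz := (hZpos M (hwpos M)).ne'
      rw [Finset.prod_range_succ, Finset.sum_range_succ, neg_add, Real.exp_add, ← mul_assoc,
        ← mul_assoc, ← ih, hwrec, neg_mul]
      field_simp
  have hsumexp : ∏ k ∈ Finset.range K, Z (k + 1) =
      ∑ n, 1 / N * Real.exp (-∑ k ∈ Finset.range K, α (k + 1) * β (k + 1) n) := by
    simp only [← hprod]
    rw [← Finset.sum_mul, hwsum, one_mul]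
  have hbound : (1 / (N : ℝ)) *
        ((Finset.univ.filter (fun n : Fin N =>
          (∑ k ∈ Finset.range K, α (k + 1) * β (k + 1) n) /
            (∑ k ∈ Finset.range K, α (k + 1)) ≤ θ)).card : ℝ) ≤
      Real.exp (θ * ∑ k ∈ Finset.range K, α (k + 1)) * ∏ k ∈ Finset.range K, Z (k + 1) := by
    rw [hsumexp, Finset.mul_sum, mul_comm, ← nsmul_eq_mul, ← Finset.sum_const]
    refine le_trans (Finset.sum_le_sum fun n hn => ?_)
      (Finset.sum_le_sum_of_subset_of_nonneg (Finset.filter_subset _ _)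
        (fun n _ _ => by positivity))
    rw [Finset.mem_filter, div_le_iff₀ hA] at hn
    rw [mul_left_comm, ← Real.exp_add]
    refine le_mul_of_one_le_right (by positivity) (Real.one_le_exp ?_)
    linarith [hn.2]
  refine hbound.trans ?_
  have h4 : (4 : ℝ) ^ ((K : ℝ) / q) = ∏ k ∈ Finset.range K, (4 : ℝ) ^ (1 / q) := by
    rw [Finset.prod_const, Finset.card_range, ← Real.rpow_mul_natCast (by norm_num)]
    congr 1; ring
  rw [h4, ← Finset.prod_mul_distrib, Finset.mul_sum, Real.exp_sum, ← Finset.prod_mul_distrib]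
  refine Finset.prod_le_prod (fun k _ => (mul_pos (Real.exp_pos _) (hZpos k (hwpos k))).le)
    (fun k _ => ?_)
  rw [hZeq]
  exact apw_step q hq _ θ _ (hρ0 k) (hρ1 k) (hα k)
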